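/- arXiv:2104.04094 — 2 statements merged into one kernel-verified Lean document; each statement's English description precedes it below -/
import Mathlib

section
/- Let 𝒜 be an abelian category admitting Ext-groups, and let 0 → F →^f G →^π E → 0 be a short exact sequence in 𝒜. Assume Hom(G,F) = 0, Ext¹(G,F) = 0, Ext¹(G,G) = 0, and that precomposition with f gives an isomorphism Hom(G,G) → Hom(F,G). Then the connecting homomorphism δ : Hom(F,F) → Ext¹(E,F) associated to the short exact sequence (arising from the long exact sequence for Hom(−,F)) is an isomorphism of abelian groups, and Hom(E,G) = 0 and Ext¹(E,G) = 0. -/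
open CategoryTheory CategoryTheory.Abelian

universe w v u

section Hom

variable {C : Type u} [Category.{v} C] {X Y Z W : C}

lemma eq_zero_of_precomp_injective [Limits.HasZeroMorphisms C] {f : X ⟶ Y} {g : Y ⟶ Z} [Epi g]
    (hfg : f ≫ g = 0) (hf : Function.Injective fun φ : Y ⟶ W => f ≫ φ) (ψ : Z ⟶ W) : ψ = 0 := by
  have hgψ : g ≫ ψ = 0 := hf <| by
    simp only [reassoc_of% hfg, Limits.zero_comp, Limits.comp_zero]
  exact Limits.zero_of_epi_comp g hgψ

lemma precomp_mk₀_surjective_iff [Abelian C] [HasExt.{w} C] (f : X ⟶ Y) :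
    Function.Surjective ((Ext.mk₀ f).precomp W (zero_add 0)) ↔
      Function.Surjective fun φ : Y ⟶ W => f ≫ φ := by
  have hcomm : (Ext.mk₀ f).precomp W (zero_add 0) ∘ Ext.mk₀ = Ext.mk₀ ∘ fun φ => f ≫ φ :=
    funext fun φ => Ext.mk₀_comp_mk₀ f φ
  rw [← (Ext.mk₀_bijective Y W).surjective.of_comp_iff, hcomm,
    Function.Surjective.of_comp_iff' (Ext.mk₀_bijective X W)]

end Hom

section LongExactSequence

variable {C : Type u} [Category.{v} C] [Abelian C] [HasExt.{w} C] {S : ShortComplex C}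
  (hS : S.ShortExact) (Y : C) {n₀ n₁ : ℕ} (h : 1 + n₀ = n₁)

lemma precomp_extClass_injective_iff :
    Function.Injective (hS.extClass.precomp Y h) ↔
      (Ext.mk₀ S.f).precomp Y (zero_add n₀) = 0 := by
  rw [injective_iff_map_eq_zero]
  constructor
  · exact fun hδ => AddMonoidHom.ext fun x => hδ _ (hS.extClass_comp_assoc x (h := h))
  · intro hf x hx
    obtain ⟨y, rfl⟩ := Ext.contravariant_sequence_exact₁ hS Y x h hx
    exact DFunLike.congr_fun hf y

lemma precomp_extClass_surjective_iff :
    Function.Surjective (hS.extClass.precomp Y h) ↔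
      (Ext.mk₀ S.g).precomp Y (zero_add n₁) = 0 := by
  constructor
  · intro hδ
    ext x
    obtain ⟨y, rfl⟩ := hδ x
    exact hS.comp_extClass_assoc y h
  · exact fun hg x =>
      Ext.contravariant_sequence_exact₃ hS Y x (DFunLike.congr_fun hg x) h

lemma precomp_extClass_eq_zero_iff :
    hS.extClass.precomp Y h = 0 ↔
      Function.Surjective ((Ext.mk₀ S.f).precomp Y (zero_add n₀)) := by
  constructor
  · exact fun hδ x =>
      Ext.contravariant_sequence_exact₁ hS Y x h (DFunLike.congr_fun hδ x)
  · intro hf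
    ext x
    obtain ⟨y, rfl⟩ := hf x
    exact hS.extClass_comp_assoc y (h := h)

lemma precomp_extClass_bijective [Subsingleton (Ext.{w} S.X₂ Y n₀)]
    [Subsingleton (Ext.{w} S.X₂ Y n₁)] : Function.Bijective (hS.extClass.precomp Y h) :=
  ⟨(precomp_extClass_injective_iff hS Y h).2 (Subsingleton.elim _ _),
    (precomp_extClass_surjective_iff hS Y h).2 <| AddMonoidHom.ext fun _ =>
      Subsingleton.elim _ _⟩

include hS h in
lemma subsingleton_ext_X₃_iff :
    Subsingleton (Ext.{w} S.X₃ Y n₁) ↔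
      Function.Surjective ((Ext.mk₀ S.f).precomp Y (zero_add n₀)) ∧
        (Ext.mk₀ S.g).precomp Y (zero_add n₁) = 0 := by
  rw [← precomp_extClass_eq_zero_iff hS Y h, ← precomp_extClass_surjective_iff hS Y h]
  constructor
  · intro _
    exact ⟨AddMonoidHom.ext fun _ => Subsingleton.elim _ _, Function.surjective_to_subsingleton _⟩
  · rintro ⟨hzero, hsurj⟩
    rw [hzero] at hsurj
    exact subsingleton_of_forall_eq 0 fun x => (hsurj x).elim fun _ hx => hx.symm

end LongExactSequence

/-- for a short exact sequence `0 → F → G → E → 0` with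
`Hom(G,F) = 0`, `Ext¹(G,F) = 0`, `Ext¹(G,G) = 0` and such that precomposition
with `f` is an isomorphism `Hom(G,G) ≅ Hom(F,G)`, the connecting homomorphism
`δ : Hom(F,F) → Ext¹(E,F)`, `φ ↦ extClass ∘ φ`, is an isomorphism of abelian
groups, and `Hom(E,G) = 0` and `Ext¹(E,G) = 0`. -/
theorem connecting_iso_and_vanishing
    {C : Type u} [Category.{v} C] [Abelian C] [HasExt.{w} C]
    {F G E : C} (f : F ⟶ G) (π : G ⟶ E) (hw : f ≫ π = 0)
    (hS : (ShortComplex.mk f π hw).ShortExact)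
    (h1 : ∀ φ : G ⟶ F, φ = 0)
    (h2 : Subsingleton (Ext.{w} G F 1))
    (h3 : Subsingleton (Ext.{w} G G 1))
    (h4 : Function.Bijective (fun φ : G ⟶ G => f ≫ φ)) :
    Function.Bijective
      (fun φ : F ⟶ F => hS.extClass.comp (Ext.mk₀ φ) (add_zero 1)) ∧
    (∀ ψ : E ⟶ G, ψ = 0) ∧
    Subsingleton (Ext.{w} E G 1) := by
  have : Epi π := hS.epi_g
  have : Subsingleton (G ⟶ F) := subsingleton_of_forall_eq 0 h1
  have : Subsingleton (Ext.{w} G F 0) := Ext.homEquiv₀.subsingleton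
  refine ⟨?_, eq_zero_of_precomp_injective hw h4.injective, ?_⟩
  · exact (precomp_extClass_bijective hS F (add_zero 1)).comp (Ext.mk₀_bijective F F)
  · have hπ : (Ext.mk₀ π).precomp G (zero_add 1) = 0 :=
      AddMonoidHom.ext fun _ => Subsingleton.elim _ _
    exact (subsingleton_ext_X₃_iff hS G (add_zero 1)).2
      ⟨(precomp_mk₀_surjective_iff f).2 h4.surjective, hπ⟩
end

section
/- Let 𝒜 be an abelian category admitting Ext-groups, and let 0 → F →^f G →^π E → 0 be a short exact sequence in 𝒜. Assume Hom(G,F) = 0, Ext¹(G,F) = 0, Ext¹(G,G) = 0, that precomposition with f gives an isomorphism Hom(G,G) → Hom(F,G), and that Ext²(E,F) = 0. Then Ext¹(E,E) = 0 and the connecting homomorphism Hom(E,E) → Ext¹(E,F) (from the long exact sequence for Hom(E,−)) is an isomorphism; in particular End(E) is isomorphic as an abelian group to End(F), so if End(F) ≅ k and Ext¹(F,F) = 0 then E is exceptional (End(E) ≅ k and Ext¹(E,E) = 0). -/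
open CategoryTheory CategoryTheory.Abelian

universe w v u

/-!
Write `e` for the class of the sequence in `Ext¹(E, F)`. In the long exact sequences, the
hypotheses on `Hom(G, F)` and `Ext¹(G, F)` make `ψ ↦ e ψ` an isomorphism `End(F) ≅ Ext¹(E, F)`,
and those on `Ext¹(G, G)` and on precomposition with `f` give `Hom(E, G) = Ext¹(E, G) = 0`, which
makes `φ ↦ φ e` an isomorphism `End(E) ≅ Ext¹(E, F)`. Associativity of the Yoneda product shows
that the bijection `φ ↔ ψ` given by `φ e = e ψ` is multiplicative. The vanishing of `Ext¹(E, E)`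
follows since this group sits between `Ext¹(E, G)` and `Ext²(E, F)`.
-/

section Hom

variable {C : Type u} [Category.{v} C]

lemma subsingleton_hom_of_comp_injective [Limits.HasZeroMorphisms C] {X Y Z : C} {f : X ⟶ Y}
    {g : Y ⟶ Z} [Epi g] (w : f ≫ g = 0) {W : C}
    (hf : Function.Injective fun φ : Y ⟶ W => f ≫ φ) : Subsingleton (Z ⟶ W) where
  allEq φ ψ := by
    have : g ≫ φ = g ≫ ψ := hf (by simp only [← Category.assoc, w, Limits.zero_comp])
    rwa [cancel_epi] at this

lemma bijective_smul_id_of_endAlgEquiv {R : Type*} [CommSemiring R] [Preadditive C] [Linear R C]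
    {X Y : C} (e : End X ≃ₐ[R] End Y) (hX : Function.Bijective fun r : R => r • 𝟙 X) :
    Function.Bijective fun r : R => r • 𝟙 Y := by
  have h : e ∘ (fun r : R => r • 𝟙 X) = fun r : R => r • 𝟙 Y := funext e.commutes
  exact h ▸ e.bijective.comp hX

end Hom

section Ext

variable {C : Type u} [Category.{v} C] [Abelian C] [HasExt.{w} C]

lemma precomp_mk₀_surjective {X Y Z : C} {f : X ⟶ Y}
    (hf : Function.Surjective fun φ : Y ⟶ Z => f ≫ φ) :
    Function.Surjective ((Ext.mk₀ f).precomp Z (zero_add 0)) := by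
  intro x
  obtain ⟨φ, rfl⟩ := (Ext.mk₀_bijective X Z).surjective x
  obtain ⟨ψ, rfl⟩ := hf φ
  exact ⟨Ext.mk₀ ψ, Ext.mk₀_comp_mk₀ f ψ⟩

lemma subsingleton_ext_zero (X Y : C) [Subsingleton (X ⟶ Y)] : Subsingleton (Ext.{w} X Y 0) :=
  Ext.homEquiv₀.subsingleton

section LongExactSequence

variable {S : ShortComplex C} (hS : S.ShortExact)

include hS in
lemma subsingleton_ext_from_X₃_of_precomp_surjective {Y : C} {n m : ℕ} (hm : 1 + n = m)
    (hf : Function.Surjective ((Ext.mk₀ S.f).precomp Y (zero_add n)))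
    [Subsingleton (Ext.{w} S.X₂ Y m)] : Subsingleton (Ext.{w} S.X₃ Y m) := by
  refine subsingleton_of_forall_eq 0 fun x => ?_
  obtain ⟨y, rfl⟩ := Ext.contravariant_sequence_exact₃ hS Y x (Subsingleton.elim _ _) hm
  obtain ⟨z, rfl⟩ := hf y
  exact hS.extClass_comp_assoc z

include hS in
lemma subsingleton_ext_to_X₃ (X : C) {n m : ℕ} (hm : n + 1 = m)
    [Subsingleton (Ext.{w} X S.X₂ n)] [Subsingleton (Ext.{w} X S.X₁ m)] :
    Subsingleton (Ext.{w} X S.X₃ n) := by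
  refine subsingleton_of_forall_eq 0 fun x => ?_
  obtain ⟨y, rfl⟩ := Ext.covariant_sequence_exact₃ X hS x hm (Subsingleton.elim _ _)
  rw [Subsingleton.elim y 0, Ext.zero_comp]

lemma bijective_postcomp_extClass (X : C) {n m : ℕ} (hm : n + 1 = m)
    [Subsingleton (Ext.{w} X S.X₂ n)] [Subsingleton (Ext.{w} X S.X₂ m)] :
    Function.Bijective (hS.extClass.postcomp X hm) := by
  refine ⟨(injective_iff_map_eq_zero _).2 fun x hx => ?_, fun x =>
    Ext.covariant_sequence_exact₁ X hS x (Subsingleton.elim _ _) hm⟩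
  obtain ⟨y, rfl⟩ := Ext.covariant_sequence_exact₃ X hS x hm hx
  rw [Subsingleton.elim y 0, Ext.zero_comp]

lemma bijective_precomp_extClass (Y : C) {n m : ℕ} (hm : 1 + n = m)
    [Subsingleton (Ext.{w} S.X₂ Y n)] [Subsingleton (Ext.{w} S.X₂ Y m)] :
    Function.Bijective (hS.extClass.precomp Y hm) := by
  refine ⟨(injective_iff_map_eq_zero _).2 fun x hx => ?_, fun x =>
    Ext.contravariant_sequence_exact₃ hS Y x (Subsingleton.elim _ _) hm⟩
  obtain ⟨y, rfl⟩ := Ext.contravariant_sequence_exact₁ hS Y x hm hx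
  rw [Subsingleton.elim y 0, Ext.comp_zero]

end LongExactSequence

section EndAlgEquiv

variable (R : Type*) [CommRing R] [Linear R C] {X Y : C} {n : ℕ} {e : Ext.{w} X Y n}

/-- The linear isomorphism `End X ≃ Ext X Y n`, `φ ↦ φ e`, attached to a class `e` such that
postcomposition with `e` is bijective on `Ext X X 0`. -/
noncomputable def endLinearEquivOfPostcomp
    (he : Function.Bijective (e.postcomp X (zero_add n))) : End X ≃ₗ[R] Ext.{w} X Y n :=
  Ext.linearEquiv₀.symm ≪≫ₗ LinearEquiv.ofBijective (e.postcompOfLinear R X (zero_add n)) he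

/-- The linear isomorphism `End Y ≃ Ext X Y n`, `ψ ↦ e ψ`, attached to a class `e` such that
precomposition with `e` is bijective on `Ext Y Y 0`. -/
noncomputable def endLinearEquivOfPrecomp
    (he : Function.Bijective (e.precomp Y (add_zero n))) : End Y ≃ₗ[R] Ext.{w} X Y n :=
  Ext.linearEquiv₀.symm ≪≫ₗ LinearEquiv.ofBijective (e.precompOfLinear R Y (add_zero n)) he

variable (hX : Function.Bijective (e.postcomp X (zero_add n)))
  (hY : Function.Bijective (e.precomp Y (add_zero n)))

/-- The linear isomorphism `End X ≃ End Y` sending `φ` to the unique `ψ` with `φ e = e ψ`. -/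
noncomputable def endLinearEquivOfExt : End X ≃ₗ[R] End Y :=
  endLinearEquivOfPostcomp R hX ≪≫ₗ (endLinearEquivOfPrecomp R hY).symm

lemma comp_mk₀_endLinearEquivOfExt (φ : End X) :
    e.comp (Ext.mk₀ (endLinearEquivOfExt R hX hY φ)) (add_zero n) =
      (Ext.mk₀ φ).comp e (zero_add n) :=
  (endLinearEquivOfPrecomp R hY).apply_symm_apply (endLinearEquivOfPostcomp R hX φ)

lemma endLinearEquivOfExt_eq_iff {φ : End X} {ψ : End Y} :
    endLinearEquivOfExt R hX hY φ = ψ ↔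
      (Ext.mk₀ φ).comp e (zero_add n) = e.comp (Ext.mk₀ ψ) (add_zero n) :=
  LinearEquiv.symm_apply_eq _

lemma endLinearEquivOfExt_one : endLinearEquivOfExt R hX hY 1 = 1 := by
  simp only [endLinearEquivOfExt_eq_iff, End.one_def, Ext.mk₀_id_comp, Ext.comp_mk₀_id]

lemma endLinearEquivOfExt_mul (φ₁ φ₂ : End X) :
    endLinearEquivOfExt R hX hY (φ₁ * φ₂) =
      endLinearEquivOfExt R hX hY φ₁ * endLinearEquivOfExt R hX hY φ₂ := by
  rw [endLinearEquivOfExt_eq_iff]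
  set ψ₁ := endLinearEquivOfExt R hX hY φ₁
  set ψ₂ := endLinearEquivOfExt R hX hY φ₂
  calc (Ext.mk₀ (φ₂ ≫ φ₁)).comp e (zero_add n)
      = (Ext.mk₀ φ₂).comp ((Ext.mk₀ φ₁).comp e (zero_add n)) (zero_add n) :=
        (Ext.mk₀_comp_mk₀_assoc φ₂ φ₁ e).symm
    _ = (Ext.mk₀ φ₂).comp (e.comp (Ext.mk₀ ψ₁) (add_zero n)) (zero_add n) := by
        rw [comp_mk₀_endLinearEquivOfExt]
    _ = ((Ext.mk₀ φ₂).comp e (zero_add n)).comp (Ext.mk₀ ψ₁) (add_zero n) :=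
        (Ext.comp_assoc_of_third_deg_zero _ _ _ _).symm
    _ = (e.comp (Ext.mk₀ ψ₂) (add_zero n)).comp (Ext.mk₀ ψ₁) (add_zero n) := by
        rw [comp_mk₀_endLinearEquivOfExt]
    _ = e.comp (Ext.mk₀ (ψ₂ ≫ ψ₁)) (add_zero n) := by
        rw [Ext.comp_assoc_of_third_deg_zero, Ext.mk₀_comp_mk₀]

/-- `endLinearEquivOfExt` as an isomorphism of algebras. -/
noncomputable def endAlgEquivOfExt : End X ≃ₐ[R] End Y :=
  AlgEquiv.ofLinearEquiv (endLinearEquivOfExt R hX hY) (endLinearEquivOfExt_one R hX hY)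
    (endLinearEquivOfExt_mul R hX hY)

end EndAlgEquiv

theorem middle_term_exceptional_general (R : Type*) [CommRing R] [Linear R C]
    {F G E : C} (f : F ⟶ G) (π : G ⟶ E) (hw : f ≫ π = 0)
    (hS : (ShortComplex.mk f π hw).ShortExact)
    (hGF : ∀ φ : G ⟶ F, φ = 0)
    (hGF₁ : Subsingleton (Ext.{w} G F 1))
    (hGG₁ : Subsingleton (Ext.{w} G G 1))
    (hf : Function.Bijective fun φ : G ⟶ G => f ≫ φ)
    (hEF₂ : Subsingleton (Ext.{w} E F 2)) :
    Subsingleton (Ext.{w} E E 1) ∧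
    Function.Bijective (fun φ : E ⟶ E => (Ext.mk₀ φ).comp hS.extClass (zero_add 1)) ∧
    Nonempty (End E ≃ₐ[R] End F) := by
  have : Epi π := hS.epi_g
  have : Subsingleton (G ⟶ F) := subsingleton_of_forall_eq 0 hGF
  have : Subsingleton (E ⟶ G) := subsingleton_hom_of_comp_injective hw hf.injective
  have : Subsingleton (Ext.{w} G F 0) := subsingleton_ext_zero G F
  have : Subsingleton (Ext.{w} E G 0) := subsingleton_ext_zero E G
  have : Subsingleton (Ext.{w} E G 1) :=
    subsingleton_ext_from_X₃_of_precomp_surjective hS (add_zero 1)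
      (precomp_mk₀_surjective hf.surjective)
  have hE : Function.Bijective (hS.extClass.postcomp E (zero_add 1)) :=
    bijective_postcomp_extClass hS E (zero_add 1)
  have hF : Function.Bijective (hS.extClass.precomp F (add_zero 1)) :=
    bijective_precomp_extClass hS F (add_zero 1)
  exact ⟨subsingleton_ext_to_X₃ hS E one_add_one_eq_two,
    hE.comp (Ext.mk₀_bijective E E), ⟨endAlgEquivOfExt R hE hF⟩⟩

end Ext

/-- for a short exact sequence `0 → F → G → E → 0` with
`Hom(G,F) = 0`, `Ext¹(G,F) = 0`, `Ext¹(G,G) = 0`, precomposition with `f` an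
isomorphism `Hom(G,G) ≅ Hom(F,G)`, and `Ext²(E,F) = 0`, one has
`Ext¹(E,E) = 0` and the connecting homomorphism
`Hom(E,E) → Ext¹(E,F)`, `φ ↦ φ ∘ extClass`, is an isomorphism; in particular
`End(E) ≅ End(F)` as abelian groups, so if `End(F) ≅ k` and `Ext¹(F,F) = 0`
then `E` is exceptional. -/
theorem middle_term_exceptional
    {C : Type u} [Category.{v} C] [Abelian C] [HasExt.{w} C]
    (k : Type*) [Field k] [Linear k C]
    {F G E : C} (f : F ⟶ G) (π : G ⟶ E) (hw : f ≫ π = 0)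
    (hS : (ShortComplex.mk f π hw).ShortExact)
    (h1 : ∀ φ : G ⟶ F, φ = 0)
    (h2 : Subsingleton (Ext.{w} G F 1))
    (h3 : Subsingleton (Ext.{w} G G 1))
    (h4 : Function.Bijective (fun φ : G ⟶ G => f ≫ φ))
    (h5 : Subsingleton (Ext.{w} E F 2)) :
    Subsingleton (Ext.{w} E E 1) ∧
    Function.Bijective
      (fun φ : E ⟶ E => (Ext.mk₀ φ).comp hS.extClass (zero_add 1)) ∧
    Nonempty ((E ⟶ E) ≃+ (F ⟶ F)) ∧
    (Function.Bijective (fun a : k => a • (𝟙 F)) →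
      Subsingleton (Ext.{w} F F 1) →
      (Function.Bijective (fun a : k => a • (𝟙 E)) ∧ Subsingleton (Ext.{w} E E 1))) := by
  obtain ⟨hE, hδ, ⟨e⟩⟩ := middle_term_exceptional_general k f π hw hS h1 h2 h3 h4 h5
  exact ⟨hE, hδ, ⟨e.toAddEquiv⟩, fun hk _ => ⟨bijective_smul_id_of_endAlgEquiv e.symm hk, hE⟩⟩
end
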